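/- Let F be a field with more than k elements, let n > k ≥ 2 with n + k odd, and let T be a linear map on M_{n×k}(F) such that det_{n,k}(T(X)) = det_{n,k}(X) for all X and such that the image of T equals M^0_{n,k}(F). Then L^+ ∘ L^- ∘ T = T and T ∘ L^+ ∘ L^- = T; consequently, setting S = L^- ∘ T ∘ L^+, one has T = L^+ ∘ S ∘ L^-. -/

import Mathlib

open Classical in
noncomputable def cullisDet {F : Type*} [Field F] {n k : ℕ}
    (X : Matrix (Fin n) (Fin k) F) : F :=
  ∑ f : Fin k → Fin n, if StrictMono f then
    (-1 : F) ^ (∑ j : Fin k, ((f j : ℕ) - (j : ℕ))) * (X.submatrix f id).det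
  else 0


/-- `L⁻`: subtract the last row from the others and delete it. -/
def Lminus {F : Type*} [Field F] {n k : ℕ}
    (X : Matrix (Fin n) (Fin k) F) : Matrix (Fin (n - 1)) (Fin k) F :=
  fun i j => X ⟨i, by have := i.isLt; omega⟩ j - X ⟨n - 1, by have := i.isLt; omega⟩ j


/-- `L⁺`: append a zero row at the bottom. -/
def Lplus {F : Type*} [Field F] {n k : ℕ}
    (Y : Matrix (Fin (n - 1)) (Fin k) F) : Matrix (Fin n) (Fin k) F :=
  fun i j => if h : (i : ℕ) < n - 1 then Y ⟨i, h⟩ j else 0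

theorem cd_zero_cols {F : Type*} [Field F] {n : ℕ} (X : Matrix (Fin n) (Fin 0) F) :
    cullisDet X = 1 := by
  simp [cullisDet, StrictMono]

theorem cd_zero_rows {F : Type*} [Field F] {k : ℕ} (X : Matrix (Fin 0) (Fin (k+1)) F) :
    cullisDet X = 0 := by
  unfold cullisDet
  apply Finset.sum_eq_zero
  intro f _
  exact (f 0).elim0

theorem cd_perm {F : Type*} [Field F] {n k : ℕ} (X : Matrix (Fin n) (Fin k) F)
    (σ : Equiv.Perm (Fin k)) :
    cullisDet (X.submatrix id σ) = (Equiv.Perm.sign σ : F) * cullisDet X := by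
  unfold cullisDet
  rw [Finset.mul_sum]
  refine Finset.sum_congr rfl fun f _ => ?_
  split_ifs
  · have := Matrix.det_permute' σ (X.submatrix f id)
    simp only [Matrix.submatrix_submatrix, Function.comp_id, Function.id_comp] at this ⊢
    rw [this]; ring
  · simp

theorem cd_updateCol_add {F : Type*} [Field F] {n k : ℕ} (X : Matrix (Fin n) (Fin k) F)
    (j : Fin k) (u v : Fin n → F) (c : F) :
    cullisDet (X.updateCol j (u + c • v)) =
      cullisDet (X.updateCol j u) + c * cullisDet (X.updateCol j v) := by
  unfold cullisDet
  rw [Finset.mul_sum, ← Finset.sum_add_distrib]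
  refine Finset.sum_congr rfl fun f _ => ?_
  split_ifs
  · have h : ∀ w : Fin n → F, (X.updateCol j w).submatrix f id
        = (X.submatrix f id).updateCol j (w ∘ f) := by
      intro w; ext a b; simp [Matrix.updateCol_apply]
    simp only [h]
    have : (u + c • v) ∘ f = u ∘ f + c • (v ∘ f) := rfl
    rw [this, Matrix.det_updateCol_add, Matrix.det_updateCol_smul]
    ring
  · simp

theorem cd_rec {F : Type*} [Field F] {n k : ℕ} (X : Matrix (Fin (n+1)) (Fin (k+1)) F) :
    cullisDet X = (-1)^(k+1) * cullisDet (X.submatrix Fin.succ id) +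
      ∑ j : Fin (k+1), (-1)^(j:ℕ) * X 0 j * cullisDet (X.submatrix Fin.succ j.succAbove) := by
  classical
  have key : ∀ G : (Fin (k+1) → Fin (n+1)) → F,
      (∑ f, if StrictMono f then G f else 0) =
      (∑ g : Fin (k+1) → Fin n, if StrictMono g then G (fun i => (g i).succ) else 0) +
      ∑ g : Fin k → Fin n, if StrictMono g then G (Fin.cons 0 (fun i => (g i).succ)) else 0 := by
    intro G
    simp only [← Finset.sum_filter]
    rw [← Finset.sum_filter_add_sum_filter_not _ (fun f => f 0 ≠ 0)]
    congr 1
    · symm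
      refine Finset.sum_bij (fun g _ i => (g i).succ) ?_ ?_ ?_ ?_
      · intro g hg
        simp only [Finset.mem_filter, Finset.mem_univ, true_and] at hg ⊢
        exact ⟨fun a b hab => by simpa using hg hab, Fin.succ_ne_zero _⟩
      · intro g _ g' _ h
        funext i
        exact Fin.succ_injective _ (congrFun h i)
      · intro f hf
        simp only [Finset.mem_filter, Finset.mem_univ, true_and] at hf
        have h0 : ∀ i, f i ≠ 0 := by
          intro i hi
          have h1 := hf.1.monotone (Fin.zero_le i)
          rw [hi] at h1
          exact hf.2 (Fin.le_zero_iff.1 h1)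
        refine ⟨fun i => (f i).pred (h0 i), ?_, ?_⟩
        · simp only [Finset.mem_filter, Finset.mem_univ, true_and]
          intro a b hab
          simpa using hf.1 hab
        · simp
      · intros; rfl
    · symm
      refine Finset.sum_bij (fun g _ => Fin.cons 0 (fun i => (g i).succ)) ?_ ?_ ?_ ?_
      · intro g hg
        simp only [Finset.mem_filter, Finset.mem_univ, true_and] at hg ⊢
        refine ⟨?_, by simp⟩
        intro a b hab
        induction b using Fin.cases with
        | zero => simp at hab
        | succ b =>
          induction a using Fin.cases with
          | zero => simp
          | succ a => simpa using hg (by simpa using hab)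
      · intro g _ g' _ h
        funext i
        have := congrFun h i.succ
        simpa using this
      · intro f hf
        simp only [Finset.mem_filter, Finset.mem_univ, true_and, not_not] at hf
        have h0 : ∀ i : Fin k, f i.succ ≠ 0 := by
          intro i hi
          have h1 := hf.1 (Fin.succ_pos i)
          rw [hi] at h1
          simp at h1
        refine ⟨fun i => (f i.succ).pred (h0 i), ?_, ?_⟩
        · simp only [Finset.mem_filter, Finset.mem_univ, true_and]
          intro a b hab
          simpa using hf.1 (by simpa using hab)
        · funext i
          induction i using Fin.cases with
          | zero => simp [hf.2]
          | succ i => simp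
      · intros; rfl
  have le : ∀ {a b : ℕ} (g : Fin a → Fin b), StrictMono g → ∀ i : Fin a, (i:ℕ) ≤ (g i : ℕ) := by
    rintro a b g hg ⟨i, hi⟩
    induction i with
    | zero => simp
    | succ i ih =>
      have h1 := ih (by omega)
      have h2 : g ⟨i, by omega⟩ < g ⟨i+1, hi⟩ := hg (by simp)
      have h3 : (g ⟨i, by omega⟩ : ℕ) < g ⟨i+1, hi⟩ := h2
      simp only at h1 ⊢
      omega
  unfold cullisDet
  rw [key]
  congr 1
  · rw [Finset.mul_sum]
    refine Finset.sum_congr rfl fun g _ => ?_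
    split_ifs with hg
    · have : ∑ j : Fin (k+1), (((g j).succ : ℕ) - (j : ℕ)) = (k+1) + ∑ j : Fin (k+1), ((g j : ℕ) - (j:ℕ)) := by
        have h1 : ∀ j : Fin (k+1), (((g j).succ : ℕ) - (j : ℕ)) = 1 + ((g j : ℕ) - (j:ℕ)) := by
          intro j
          have := le g hg j
          simp only [Fin.val_succ]; omega
        simp only [h1, Finset.sum_add_distrib]; simp
      rw [this, pow_add, mul_assoc]; rfl
    · simp
  · simp only [Finset.mul_sum]
    rw [Finset.sum_comm]
    refine Finset.sum_congr rfl fun g _ => ?_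
    split_ifs with hg
    · rw [Fin.sum_univ_succ]
      have h1 : ∀ j : Fin k, (((Fin.cons 0 (fun i => (g i).succ) : Fin (k+1) → Fin (n+1)) j.succ : ℕ) - ((j.succ : Fin (k+1)) : ℕ)) = (g j : ℕ) - (j:ℕ) := by
        intro j; simp
      simp only [h1, Fin.cons_zero, Fin.val_zero, Nat.sub_self, zero_add]
      rw [Matrix.det_succ_row_zero, Finset.mul_sum]
      refine Finset.sum_congr rfl fun j _ => ?_
      simp only [Matrix.submatrix_apply, Fin.cons_zero, id, Matrix.submatrix_submatrix]
      have : (X.submatrix ((Fin.cons 0 fun i => (g i).succ : Fin (k+1) → Fin (n+1)) ∘ Fin.succ) (id ∘ j.succAbove)) = (X.submatrix (Fin.succ ∘ g) (j.succAbove ∘ id)) := by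
        ext a b; simp
      simp only [Function.comp_def, id] at this ⊢
      rw [this]; ring
    · simp

/-- prepend a column -/
def consCol {F : Type*} {n k : ℕ} (z : Fin n → F) (Y : Matrix (Fin n) (Fin k) F) :
    Matrix (Fin n) (Fin (k+1)) F := fun i => Fin.cons (z i) (Y i)

/-- prepend a row -/
def consRow {F : Type*} {n k : ℕ} (r : Fin k → F) (Y : Matrix (Fin n) (Fin k) F) :
    Matrix (Fin (n+1)) (Fin k) F := Fin.cons r Y

theorem consCol_sub0 {F : Type*} {n m k : ℕ} (z : Fin n → F) (Y : Matrix (Fin n) (Fin k) F)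
    (f : Fin m → Fin n) :
    (consCol z Y).submatrix f (Fin.succAbove 0) = Y.submatrix f id := by
  ext a b; simp [consCol]

theorem consCol_subS {F : Type*} {n m k : ℕ} (z : Fin n → F) (Y : Matrix (Fin n) (Fin (k+1)) F)
    (f : Fin m → Fin n) (j : Fin (k+1)) :
    (consCol z Y).submatrix f (j.succ.succAbove) =
      consCol (z ∘ f) (Y.submatrix f j.succAbove) := by
  ext a b
  induction b using Fin.cases <;> simp [consCol]

theorem consCol_subid {F : Type*} {n m k : ℕ} (z : Fin n → F) (Y : Matrix (Fin n) (Fin k) F)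
    (f : Fin m → Fin n) :
    (consCol z Y).submatrix f id = consCol (z ∘ f) (Y.submatrix f id) := by
  ext a b
  induction b using Fin.cases <;> simp [consCol]

/-- column of ones -/
theorem cd_ones {F : Type*} [Field F] (n : ℕ) : ∀ (k : ℕ) (Y : Matrix (Fin n) (Fin k) F),
    (Even (n + k) → cullisDet (consCol (fun _ => 1) Y) = 0) ∧
    (Odd (n + k) → cullisDet (consCol (fun _ => 1) Y) = (-1)^k * cullisDet Y) := by
  induction n with
  | zero =>
    intro k Y
    refine ⟨fun _ => cd_zero_rows _, fun h => ?_⟩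
    cases k with
    | zero => simp at h
    | succ k => rw [cd_zero_rows, cd_zero_rows, mul_zero]
  | succ n ih =>
    intro k Y
    have e : ((fun _ => 1 : Fin (n+1) → F) ∘ Fin.succ) = fun _ => 1 := rfl
    rw [cd_rec, Fin.sum_univ_succ, consCol_sub0, consCol_subid, e]
    have e0 : consCol (fun _ => (1:F)) Y 0 0 = 1 := rfl
    rw [e0]
    cases k with
    | zero =>
      simp only [cd_zero_cols, Finset.univ_eq_empty, Finset.sum_empty]
      refine ⟨fun h => ?_, fun h => ?_⟩
      · rw [(ih 0 _).2 (by grind), cd_zero_cols]; simp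
      · rw [(ih 0 _).1 (by grind)]; simp
    | succ k =>
      simp only [consCol_subS, e]
      have eY : ∀ j : Fin (k+1), consCol (fun _ => (1:F)) Y 0 j.succ = Y 0 j := fun _ => rfl
      simp only [eY]
      refine ⟨fun h => ?_, fun h => ?_⟩
      · rw [(ih (k+1) _).2 (by grind), Finset.sum_eq_zero]
        · simp only [Fin.val_zero, pow_zero, one_mul, add_zero, ← mul_assoc, ← pow_add]
          rw [Odd.neg_one_pow (by grind)]; ring
        · intro j _
          rw [(ih k _).1 (by grind), mul_zero]
      · rw [(ih (k+1) _).1 (by grind), cd_rec Y, mul_add, ← mul_assoc, ← pow_add,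
          Even.neg_one_pow (by grind : Even (k+1+(k+1))), Finset.mul_sum]
        simp only [mul_zero, Fin.val_zero, pow_zero, one_mul, zero_add]
        congr 1
        refine Finset.sum_congr rfl fun j _ => ?_
        rw [(ih k _).2 (by grind), Fin.val_succ]; ring

/-- row zero of `Y` vanishes -/
theorem cd_row0 {F : Type*} [Field F] {n k : ℕ} (Y : Matrix (Fin n) (Fin (k+1)) F) :
    cullisDet (consRow 0 Y) = (-1)^(k+1) * cullisDet Y := by
  rw [cd_rec, Finset.sum_eq_zero, add_zero]
  · rfl
  · intro j _; exact (by simp : (-1:F)^(j:ℕ) * 0 * _ = 0)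

theorem cd_cons_row0 {F : Type*} [Field F] {n k : ℕ} (z : Fin (n+1) → F)
    (Y : Matrix (Fin n) (Fin k) F) :
    cullisDet (consCol z (consRow 0 Y)) =
      (-1)^(k+1) * cullisDet (consCol (z ∘ Fin.succ) Y) + z 0 * cullisDet Y := by
  rw [cd_rec, Fin.sum_univ_succ, Finset.sum_eq_zero, consCol_sub0, consCol_subid, add_zero]
  · simp [consCol]; rfl
  · intro j _
    have h0 : consRow (0 : Fin _ → F) Y 0 j = 0 := rfl
    simp [consCol, h0]

theorem cd_cons2_row0 {F : Type*} [Field F] {n k : ℕ} (z y : Fin (n+1) → F)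
    (Y : Matrix (Fin n) (Fin k) F) :
    cullisDet (consCol z (consCol y (consRow 0 Y))) =
      (-1)^(k+2) * cullisDet (consCol (z ∘ Fin.succ) (consCol (y ∘ Fin.succ) Y)) 
      + z 0 * cullisDet (consCol (y ∘ Fin.succ) Y) 
      - y 0 * cullisDet (consCol (z ∘ Fin.succ) Y) := by
  have eY : (consRow 0 Y).submatrix Fin.succ id = Y := rfl
  rw [cd_rec, Fin.sum_univ_succ, Fin.sum_univ_succ, Finset.sum_eq_zero, consCol_sub0, consCol_subid,
    consCol_subid, consCol_subS, consCol_sub0, eY]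
  · simp [consCol]; ring
  · intro j _
    have h0 : consRow (0 : Fin _ → F) Y 0 j = 0 := rfl
    simp [consCol, h0]

theorem cd_cons_zero {F : Type*} [Field F] {n k : ℕ} (X : Matrix (Fin n) (Fin k) F) (j : Fin k)
    (h : ∀ i, X i j = 0) : cullisDet X = 0 := by
  unfold cullisDet
  refine Finset.sum_eq_zero fun f _ => ?_
  split_ifs
  · rw [Matrix.det_eq_zero_of_column_eq_zero j (by intro i; simp [h]), mul_zero]
  · rfl

theorem cd_exists_ne {F : Type*} [Field F] (k : ℕ) : ∀ n, k ≤ n → 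
    ∃ Y : Matrix (Fin n) (Fin k) F, cullisDet Y ≠ 0 := by
  induction k with
  | zero => intro n _; exact ⟨0, by simp [cd_zero_cols]⟩
  | succ k ih =>
    intro n hn
    obtain ⟨n, rfl⟩ : ∃ m, n = m + 1 := ⟨n - 1, by omega⟩
    obtain ⟨Y, hY⟩ := ih n (by omega)
    refine ⟨consCol (Fin.cons 1 0) (consRow 0 Y), ?_⟩
    rw [cd_cons_row0, cd_cons_zero _ 0 (by intro i; simp [consCol])]
    simpa using hY

theorem cd_diff {F : Type*} [Field F] (i : ℕ) : ∀ n k, k + 2 ≤ n → ∀ hi : i + 1 < n,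
    ∃ (Y : Matrix (Fin n) (Fin (k+1)) F) (ε : F), ε ≠ 0 ∧ cullisDet Y = 0 ∧
      ∀ z : Fin n → F, cullisDet (consCol z Y) = ε * (z ⟨i, by omega⟩ - z ⟨i+1, hi⟩) := by
  induction i with
  | zero =>
    intro n k hn hi
    obtain ⟨n, rfl⟩ : ∃ m, n = m + 2 := ⟨n - 2, by omega⟩
    obtain ⟨Y, hY⟩ := cd_exists_ne (F := F) k n (by omega)
    have c1 : ((Fin.cons 1 (Fin.cons 1 0) : Fin (n+2) → F) ∘ Fin.succ) = Fin.cons 1 0 := rfl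
    have c2 : ((Fin.cons 1 0 : Fin (n+1) → F) ∘ Fin.succ) = 0 := rfl
    have z1 : cullisDet (consCol (0 : Fin n → F) Y) = 0 := 
      cd_cons_zero _ 0 (by intro i; simp [consCol])
    have z2 : ∀ z, cullisDet (consCol z (consCol (0 : Fin n → F) Y)) = 0 := fun z =>
      cd_cons_zero _ 1 (by intro i; rfl)
    refine ⟨consCol (Fin.cons 1 (Fin.cons 1 0)) (consRow 0 (consRow 0 Y)), cullisDet Y, hY, ?_, ?_⟩
    · rw [cd_cons_row0, c1, cd_cons_row0, c2, z1]
      cases k with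
      | zero => simp [cd_zero_cols]
      | succ k => rw [cd_row0]; simp; ring
    · intro z
      rw [cd_cons2_row0, c1, cd_cons2_row0, cd_cons_row0, cd_cons_row0, c2, z1, z2]
      simp
      ring
  | succ i ih =>
    intro n k hn hi
    obtain ⟨n, rfl⟩ : ∃ m, n = m + 1 := ⟨n - 1, by omega⟩
    cases k with
    | zero =>
      obtain ⟨Y, ε, hε, h0, h1⟩ := ih n 0 (by omega) (by omega)
      refine ⟨consRow 0 Y, ε, hε, ?_, ?_⟩
      · rw [cd_row0, h0, mul_zero]
      · intro z
        rw [cd_cons_row0, h0, h1]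
        simp
    | succ k =>
      obtain ⟨Y, ε, hε, h0, h1⟩ := ih n k (by omega) (by omega)
      have c2 : ((Fin.cons 1 0 : Fin (n+1) → F) ∘ Fin.succ) = 0 := rfl
      have z1 : cullisDet (consCol (0 : Fin n → F) Y) = 0 := 
        cd_cons_zero _ 0 (by intro i; simp [consCol])
      have z2 : ∀ z, cullisDet (consCol z (consCol (0 : Fin n → F) Y)) = 0 := fun z =>
        cd_cons_zero _ 1 (by intro i; rfl)
      refine ⟨consCol (Fin.cons 1 0) (consRow 0 Y), -ε, by simpa using hε, ?_, ?_⟩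
      · rw [cd_cons_row0, c2, z1, h0]; simp
      · intro z
        rw [cd_cons2_row0, c2, z1, z2, h1]
        simp

/-- matrix with all rows equal -/
def constRow {F : Type*} (n : ℕ) {k : ℕ} (v : Fin k → F) : Matrix (Fin n) (Fin k) F := fun _ => v

/-- adding the same row vector everywhere -/
theorem cd_translate {F : Type*} [Field F] {n k : ℕ} (hodd : Odd (n + k)) (v : Fin k → F) :
    ∀ X : Matrix (Fin n) (Fin k) F, cullisDet (X + constRow n v) = cullisDet X := by
  have hone : ∀ (X : Matrix (Fin n) (Fin k) F) (j : Fin k),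
      cullisDet (X.updateCol j (fun _ => 1)) = 0 := by
    intro X j
    obtain ⟨k, rfl⟩ : ∃ m, k = m + 1 := ⟨k - 1, by have := j.isLt; omega⟩
    have h := cd_perm (X.updateCol j (fun _ => 1)) (Equiv.swap 0 j)
    have e : (X.updateCol j (fun _ => 1)).submatrix id (Equiv.swap 0 j) = 
        consCol (fun _ => 1) (((X.updateCol j (fun _ => 1)).submatrix id (Equiv.swap 0 j)).submatrix id Fin.succ) := by
      ext a b
      induction b using Fin.cases <;> simp [consCol]
    rw [e, (cd_ones n k _).1 (by grind)] at h
    rcases mul_eq_zero.1 h.symm with h | h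
    · rcases Int.units_eq_one_or (Equiv.Perm.sign (Equiv.swap 0 j)) with h' | h' <;>
        simp [h'] at h
    · exact h
  have hsingle : ∀ (j : Fin k) (c : F) (X : Matrix (Fin n) (Fin k) F),
      cullisDet (X + constRow n (Pi.single j c)) = cullisDet X := by
    intro j c X
    have := cd_updateCol_add X j (fun i => X i j) (fun _ => 1) c
    rw [hone, mul_zero, add_zero] at this
    convert this using 2
    · ext a b
      by_cases hb : b = j
      · subst hb; simp [constRow]
      · simp [constRow, Matrix.updateCol_apply, hb]
    · ext a b
      by_cases hb : b = j
      · subst hb; simp [constRow]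
      · simp [constRow, Matrix.updateCol_apply, hb]
  let S : AddSubmonoid (Fin k → F) :=
    { carrier := {v | ∀ X : Matrix (Fin n) (Fin k) F, cullisDet (X + constRow n v) = cullisDet X}
      zero_mem' := by
        intro X
        congr 1
        ext a b; simp [constRow]
      add_mem' := by
        intro a b ha hb X
        rw [← ha X, ← hb (X + constRow n a), add_assoc]; rfl }
  have : v ∈ S := by
    rw [← Finset.univ_sum_single v]
    exact S.sum_mem fun j _ => hsingle j (v j)
  exact this

/-- the radical of the Cullis determinant -/
theorem cd_radical {F : Type*} [Field F] {n k : ℕ} (hk : 2 ≤ k) (hkn : k ≤ n)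
    (Z : Matrix (Fin n) (Fin k) F) (hZ : ∀ X, cullisDet (X + Z) = cullisDet X) 
    (j : Fin k) (i : ℕ) (hi : i + 1 < n) : Z ⟨i, by omega⟩ j = Z ⟨i+1, hi⟩ j := by
  obtain ⟨k, rfl⟩ : ∃ m, k = m + 2 := ⟨k - 2, by omega⟩
  obtain ⟨Y, ε, hε, -, h1⟩ := cd_diff (F := F) i n k hkn hi
  let σ := Equiv.swap 0 j
  let Q := consCol (fun i => Z i j) Y
  have e : (Q.submatrix id σ - Z) + Z = Q.submatrix id σ := sub_add_cancel _ _
  have h2 := hZ (Q.submatrix id σ - Z)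
  rw [e, cd_perm, cd_cons_zero (Q.submatrix id σ - Z) j (by intro i; simp [Q, σ, consCol]), h1] at h2
  rcases mul_eq_zero.1 h2 with h | h
  · rcases Int.units_eq_one_or (Equiv.Perm.sign σ) with h' | h' <;>
      simp [h'] at h
  · exact sub_eq_zero.1 ((mul_eq_zero.1 h).resolve_left hε)

/-- Lemma 4.10(b),(c),(d): if `T` preserves `det_{n,k}` and its image is the
space of matrices with zero last row, then `L⁺ ∘ L⁻ ∘ T = T`,
`T ∘ L⁺ ∘ L⁻ = T`, and hence with `S = L⁻ ∘ T ∘ L⁺` one has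
`T = L⁺ ∘ S ∘ L⁻`. -/
theorem stmt11 {F : Type*} [Field F] {n k : ℕ} (hk : 2 ≤ k) (hkn : k < n)
    (hodd : Odd (n + k)) (hF : (k : Cardinal) < Cardinal.mk F)
    (T : Matrix (Fin n) (Fin k) F →ₗ[F] Matrix (Fin n) (Fin k) F)
    (hT : ∀ X, cullisDet (T X) = cullisDet X)
    (hImg : Set.range (⇑T) =
      {X : Matrix (Fin n) (Fin k) F | ∀ q : Fin k, X ⟨n - 1, by omega⟩ q = 0}) :
    (∀ X, Lplus (Lminus (T X)) = T X) ∧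
      (∀ X, T (Lplus (Lminus X)) = T X) ∧
      (∀ X, Lplus (Lminus (T (Lplus (Lminus X)))) = T X) := by
  have hlast : ∀ X q, T X ⟨n - 1, by omega⟩ q = 0 := by
    intro X
    have : T X ∈ Set.range (⇑T) := ⟨X, rfl⟩
    rw [hImg] at this
    exact this
  have hdec : ∀ X : Matrix (Fin n) (Fin k) F,
      X = Lplus (Lminus X) + constRow n (X ⟨n - 1, by omega⟩) := by
    intro X
    ext a b
    by_cases h : (a : ℕ) < n - 1
    · simp [Lplus, Lminus, h, constRow]
    · have : a = ⟨n - 1, by omega⟩ := Fin.ext (by have := a.isLt; simp only; omega)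
      rw [this]
      simp [Lplus, constRow]
  have h1 : ∀ X, Lplus (Lminus (T X)) = T X := by
    intro X
    conv_rhs => rw [hdec (T X)]
    ext a b
    simp [hlast, constRow]
  have h2 : ∀ X, T (Lplus (Lminus X)) = T X := by
    intro X
    have hz : ∀ v : Fin k → F, T (constRow n v) = 0 := by
      intro v
      have hrad : ∀ X, cullisDet (X + T (constRow n v)) = cullisDet X := by
        intro X
        have hm : Lplus (Lminus X) ∈ Set.range (⇑T) := by
          rw [hImg]
          intro q
          simp [Lplus]
        obtain ⟨W, hW⟩ := hm
        rw [hdec X, add_right_comm, cd_translate hodd, cd_translate hodd, ← hW, ← map_add, hT, hT,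
          cd_translate hodd]
      have hc := cd_radical hk hkn.le _ hrad
      have hd : ∀ (j : Fin k) (d i : ℕ) (hi : i < n), i + d = n - 1 → T (constRow n v) ⟨i, hi⟩ j = 0 := by
        intro j d
        induction d with
        | zero =>
          intro i hi h
          obtain rfl : i = n - 1 := by omega
          exact hlast _ j
        | succ d ih =>
          intro i hi h
          rw [hc j i (by omega)]
          exact ih _ _ (by omega)
      ext a b
      exact hd b (n - 1 - a) a a.isLt (by have := a.isLt; omega)
    conv_rhs => rw [hdec X, map_add, hz, add_zero]
  exact ⟨h1, h2, fun X => by rw [h1, h2]⟩
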